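/- Let F be a field of characteristic 2 and let K/F be a field extension with K² ⊆ F. Then the Witt kernel W_q(K/F) equals Σ_{t∈K*²} ⟨1,t⟩_b ⊗ W_q(F), the subgroup of W_q(F) generated by all forms ⟨1,t⟩_b ⊗ q with t a nonzero square of an element of K (hence t ∈ F*) and q a nonsingular quadratic form over F. -/

import Mathlib

/-!  A concrete coefficient-matrix model of (possibly singular) finite-dimensional
quadratic forms over a field, suitable for characteristic 2. -/

/-- Coefficient representation of a (finite-dimensional) quadratic form over a field `F`:
the form of dimension `dim` given by `q(x) = ∑ i j, c i j * x i * x j`. -/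
structure QF (F : Type*) [Field F] : Type _ where
  dim : ℕ
  c : Matrix (Fin dim) (Fin dim) F

namespace QF

variable {F E : Type*} [Field F] [Field E]

/-- Evaluation of the quadratic form at a vector. -/
def eval (q : QF F) (x : Fin q.dim → F) : F :=
  ∑ i, ∑ j, q.c i j * x i * x j

/-- Scalar extension (base change) of a quadratic form along a ring homomorphism. -/
def map (f : F →+* E) (q : QF F) : QF E :=
  ⟨q.dim, fun i j => f (q.c i j)⟩

/-- Orthogonal sum. -/
def orthSum (q q' : QF F) : QF F :=
  ⟨q.dim + q'.dim,
    Matrix.reindex finSumFinEquiv finSumFinEquiv (Matrix.fromBlocks q.c 0 0 q'.c)⟩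

/-- Scaling `a • q`. -/
def smul (a : F) (q : QF F) : QF F := ⟨q.dim, a • q.c⟩

/-- The nonsingular binary quadratic form `[a,b] : (x,y) ↦ ax² + xy + by²`. -/
def bin (a b : F) : QF F := ⟨2, !![a, 1; 0, b]⟩

/-- The diagonal (totally singular) quadratic form `⟨a₁, …, aₙ⟩`. -/
def diag {n : ℕ} (v : Fin n → F) : QF F := ⟨n, Matrix.diagonal v⟩

/-- The zero-dimensional quadratic form. -/
def nil : QF F := { dim := 0, c := 0 }

/-- The one-dimensional form `⟨1⟩`. -/
def unit : QF F := diag (fun _ : Fin 1 => (1 : F))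

/-- Orthogonal sum of a list of forms. -/
def sumList (l : List (QF F)) : QF F := l.foldr orthSum nil

/-- `pfTensor [a₁,…,aₙ] q` is the tensor product `⟨⟨a₁,…,aₙ⟩⟩_b ⊗ q` of the bilinear
Pfister form `⟨⟨a₁,…,aₙ⟩⟩_b = ⟨1,a₁⟩_b ⊗ ⋯ ⊗ ⟨1,aₙ⟩_b` with the quadratic form `q`,
via `⟨1,a⟩_b ⊗ q ≅ q ⊥ a·q`. -/
def pfTensor (l : List F) (q : QF F) : QF F :=
  l.foldr (fun a r => orthSum r (smul a r)) q

/-- The hyperbolic plane `ℍ ≅ [0,0]`. -/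
def hypPlane : QF F := bin 0 0

/-- The orthogonal sum of `k` hyperbolic planes. -/
def hyp (k : ℕ) : QF F := sumList (List.replicate k hypPlane)

/-- The `l`-dimensional zero form `⟨0,…,0⟩`. -/
def zeros (l : ℕ) : QF F := diag (fun _ : Fin l => (0 : F))

/-- Isometry of quadratic forms. -/
def Isometric (q q' : QF F) : Prop :=
  ∃ e : (Fin q.dim → F) ≃ₗ[F] (Fin q'.dim → F), ∀ x, q'.eval (e x) = q.eval x

/-- Anisotropy: the form has no nontrivial zero. -/
def Anisotropic (q : QF F) : Prop := ∀ x, q.eval x = 0 → x = 0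

/-- A quadratic form is nonsingular if the radical of its polar form
`B_q(x,y) = q(x+y) - q(x) - q(y)` (with matrix `c + cᵀ`) is trivial. -/
def Nonsingular (q : QF F) : Prop := ∀ x, (q.c + q.c.transpose).mulVec x = 0 → x = 0

/-- A quadratic form is totally singular if its polar form vanishes identically. -/
def TotallySingular (q : QF F) : Prop := q.c + q.c.transpose = 0

/-- A quadratic form is hyperbolic if it is isometric to an orthogonal sum of
hyperbolic planes. -/
def Hyperbolic (q : QF F) : Prop := ∃ k, Isometric q (hyp k)

/-- Witt equivalence: `q ~ q'` iff the anisotropic parts agree, equivalently the two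
forms become isometric after adding suitable numbers of hyperbolic planes and zero
forms. -/
def WittEquiv (q q' : QF F) : Prop :=
  ∃ k k' l l', Isometric (orthSum q (orthSum (hyp k) (zeros l)))
    (orthSum q' (orthSum (hyp k') (zeros l')))

/-- `AnisoPartOf φ q` : `φ` is (isometric to) the anisotropic part of `q`, i.e. `φ` is
anisotropic and `q ≅ k × ℍ ⊥ φ ⊥ ⟨0,…,0⟩`. -/
def AnisoPartOf (φ q : QF F) : Prop :=
  Anisotropic φ ∧ ∃ k l, Isometric q (orthSum (hyp k) (orthSum φ (zeros l)))

/-- `Dominates q' q` means `q ≺ q'`, i.e. `q'` dominates `q`: there is an injective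
linear map `t` of the underlying spaces with `q' ∘ t = q`. -/
def Dominates (q' q : QF F) : Prop :=
  ∃ t : (Fin q.dim → F) →ₗ[F] (Fin q'.dim → F), Function.Injective t ∧
    ∀ x, q'.eval (t x) = q.eval x

/-- The affine quadric polynomial `∑ cᵢⱼ XᵢXⱼ` of a quadratic form. -/
noncomputable def toPoly (q : QF F) : MvPolynomial (Fin q.dim) F :=
  ∑ i, ∑ j, MvPolynomial.C (q.c i j) * (MvPolynomial.X i * MvPolynomial.X j)

/-- The affine coordinate ring of the (reduced) quadric `q = 0`. -/
abbrev CoordRing (q : QF F) : Type _ :=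
  MvPolynomial (Fin q.dim) F ⧸ (Ideal.span {q.toPoly}).radical

/-- The function field of the quadric `q = 0` (assuming the quadric is integral). -/
abbrev FunctionField (q : QF F) [IsDomain (CoordRing q)] : Type _ :=
  FractionRing (CoordRing q)

/-- The canonical ring homomorphism from a base field `F` into the function field of a
quadric defined over an extension field `K` of `F`. -/
noncomputable def toFunctionField {K : Type*} [Field K] [Algebra F K] (q : QF K)
    [IsDomain (CoordRing q)] : F →+* FunctionField q :=
  (algebraMap (CoordRing q) (FunctionField q)).comp
    ((algebraMap K (CoordRing q)).comp (algebraMap F K))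

end QF

/-!
Exponent one makes the entries of a Lagrangian over `K` have their squares in `F`. Over `F` write
`q ≅ ⊥ [a i, b i]`. If `q` becomes hyperbolic over `K`, it has a Lagrangian there, and after
exchanging some `a i` with `b i` to get `⊥ [c i, d i]`, this Lagrangian is the graph of a symmetric
matrix `A` over `K`, with `d j = A j j + ∑ k, c k * A k j ^ 2`. As `T k j = A k j ^ 2` lies in `F`,
so does `A j j`; expanding `[c j, d j]` additively in `d j`, the term `[c j, A j j]` equals
`[c j, c j * T j j]` in the Witt group, which cancels the diagonal terms, while for `j ≠ k`
`[c j, c k * T k j] ⊥ [c k, c j * T k j] ≅ ⟨1, T k j⟩_b ⊗ [c j, c k * T k j]`. Conversely,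
`⟨1, t⟩_b` is metabolic as soon as `t` is a square.
-/

section Lagrangian

open QuadraticMap

variable {R V V' V'' V''' : Type*} [CommRing R] [AddCommGroup V] [Module R V] [AddCommGroup V']
  [Module R V'] [AddCommGroup V''] [Module R V''] [AddCommGroup V'''] [Module R V''']

theorem polar_map_isometryEquiv {Q : QuadraticForm R V} {Q' : QuadraticForm R V'}
    (e : Q.IsometryEquiv Q') (x y : V) : polar Q' (e x) (e y) = polar Q x y := by
  simp only [polar, ← map_add, e.map_app]

theorem separatingLeft_polarBilin_congr {Q : QuadraticForm R V} {Q' : QuadraticForm R V'}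
    (h : Q.Equivalent Q') (hQ : Q.polarBilin.SeparatingLeft) : Q'.polarBilin.SeparatingLeft := by
  obtain ⟨e⟩ := h
  intro x hx
  obtain ⟨x, rfl⟩ := e.surjective x
  rw [hQ x fun y => (polar_map_isometryEquiv e x y).symm.trans (hx (e y)), map_zero]

theorem separatingLeft_polarBilin_prod_iff {Q : QuadraticForm R V} {Q' : QuadraticForm R V'} :
    (Q.prod Q').polarBilin.SeparatingLeft ↔
      Q.polarBilin.SeparatingLeft ∧ Q'.polarBilin.SeparatingLeft := by
  refine ⟨fun h => ⟨fun x hx => ?_, fun x hx => ?_⟩, fun h x hx => ?_⟩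
  · exact congr($(h (x, 0) fun y => by simpa using hx y.1).1)
  · exact congr($(h (0, x) fun y => by simpa using hx y.2).2)
  · exact Prod.ext (h.1 _ fun y => by simpa using hx (y, 0))
      (h.2 _ fun y => by simpa using hx (0, y))

theorem equivalent_of_subsingleton [Subsingleton V] [Subsingleton V'] (Q : QuadraticForm R V)
    (Q' : QuadraticForm R V') : Q.Equivalent Q' :=
  ⟨⟨LinearEquiv.ofSubsingleton V V', fun x => by
    rw [Subsingleton.elim x 0, QuadraticMap.map_zero]
    exact Q'.map_zero⟩⟩

theorem prod_equivalent_of_subsingleton [Subsingleton V'] (Q : QuadraticForm R V)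
    (Q' : QuadraticForm R V') : (Q.prod Q').Equivalent Q :=
  letI : Unique V' := uniqueOfSubsingleton 0
  ⟨{ LinearEquiv.prodUnique with
    map_app' := fun x => by simp [Subsingleton.elim x.2 0] }⟩

theorem prod_comm_equivalent (Q : QuadraticForm R V) (Q' : QuadraticForm R V') :
    (Q.prod Q').Equivalent (Q'.prod Q) :=
  ⟨IsometryEquiv.prodComm Q Q'⟩

theorem prod_assoc_equivalent (Q : QuadraticForm R V) (Q' : QuadraticForm R V')
    (Q'' : QuadraticForm R V'') : ((Q.prod Q').prod Q'').Equivalent (Q.prod (Q'.prod Q'')) :=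
  ⟨{ LinearEquiv.prodAssoc R V V' V'' with map_app' := fun _ => (add_assoc _ _ _).symm }⟩

theorem smul_equivalent_smul {Q : QuadraticForm R V} {Q' : QuadraticForm R V'}
    (h : Q.Equivalent Q') (t : R) : (t • Q).Equivalent (t • Q') :=
  h.map fun e => { e.toLinearEquiv with map_app' := fun x => congrArg (t • ·) (e.map_app x) }

/-- A Lagrangian of a possibly singular quadratic form: a totally isotropic subspace that equals
its own orthogonal. It contains the radical, so the form must vanish there. -/
structure IsLagrangian (Q : QuadraticForm R V) (L : Submodule R V) : Prop where
  isotropic : ∀ x ∈ L, Q x = 0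
  mem_of_orthogonal : ∀ x, (∀ y ∈ L, polar Q x y = 0) → x ∈ L

/-- A metabolic quadratic form is one that has a Lagrangian. A zero form is metabolic, and a
nonsingular form is metabolic exactly when it is hyperbolic. -/
def IsMetabolic (Q : QuadraticForm R V) : Prop := ∃ L, IsLagrangian Q L

namespace IsLagrangian

variable {Q : QuadraticForm R V} {L : Submodule R V}

theorem polar_eq_zero (h : IsLagrangian Q L) {x y : V} (hx : x ∈ L) (hy : y ∈ L) :
    polar Q x y = 0 := by
  simp only [polar, h.isotropic _ hx, h.isotropic _ hy, h.isotropic _ (L.add_mem hx hy), sub_zero]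

theorem map {Q' : QuadraticForm R V'} (h : IsLagrangian Q L) (e : Q.IsometryEquiv Q') :
    IsLagrangian Q' (L.map e.toLinearEquiv.toLinearMap) where
  isotropic := by
    rintro _ ⟨x, hx, rfl⟩
    exact (e.map_app x).trans (h.isotropic x hx)
  mem_of_orthogonal y hy := by
    refine ⟨e.toLinearEquiv.symm y, h.mem_of_orthogonal _ fun x hx => ?_,
      e.toLinearEquiv.apply_symm_apply y⟩
    rw [← polar_map_isometryEquiv e]
    exact (congrArg (polar Q' · (e x)) (e.toLinearEquiv.apply_symm_apply y)).trans
      (hy _ ⟨x, hx, rfl⟩)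

theorem prod {Q' : QuadraticForm R V'} {L' : Submodule R V'} (h : IsLagrangian Q L)
    (h' : IsLagrangian Q' L') : IsLagrangian (Q.prod Q') (L.prod L') where
  isotropic x hx := by
    rw [prod_apply, h.isotropic _ hx.1, h'.isotropic _ hx.2, add_zero]
  mem_of_orthogonal x hx := by
    refine ⟨h.mem_of_orthogonal _ fun y hy => ?_, h'.mem_of_orthogonal _ fun y hy => ?_⟩
    · simpa using hx (y, 0) ⟨hy, L'.zero_mem⟩
    · simpa using hx (0, y) ⟨L.zero_mem, hy⟩

end IsLagrangian

namespace IsMetabolic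

variable {Q : QuadraticForm R V} {Q' : QuadraticForm R V'}
  {Q'' : QuadraticForm R V''} {Q''' : QuadraticForm R V'''}

theorem congr (h : IsMetabolic Q) (e : Q.Equivalent Q') : IsMetabolic Q' :=
  let ⟨_, hL⟩ := h
  let ⟨e⟩ := e
  ⟨_, hL.map e⟩

theorem zero : IsMetabolic (0 : QuadraticForm R V) :=
  ⟨⊤, fun _ _ => rfl, fun _ _ => trivial⟩

theorem prod (h : IsMetabolic Q) (h' : IsMetabolic Q') : IsMetabolic (Q.prod Q') :=
  let ⟨_, hL⟩ := h
  let ⟨_, hL'⟩ := h'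
  ⟨_, hL.prod hL'⟩

theorem prod_symm (h : IsMetabolic (Q.prod Q')) : IsMetabolic (Q'.prod Q) :=
  h.congr (prod_comm_equivalent Q Q')

theorem prod_prod_prod_comm (h : IsMetabolic ((Q.prod Q').prod (Q''.prod Q'''))) :
    IsMetabolic ((Q.prod Q'').prod (Q'.prod Q''')) :=
  h.congr ⟨IsometryEquiv.prodProdProdComm Q Q' Q'' Q'''⟩

/-- The diagonal is a Lagrangian of `Q ⊥ Q`. -/
theorem prod_of_equivalent [CharP R 2] (hQ : Q.polarBilin.SeparatingLeft) (e : Q.Equivalent Q') :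
    IsMetabolic (Q.prod Q') := by
  have hdiag : IsLagrangian (Q.prod Q) (LinearMap.range (LinearMap.id.prod LinearMap.id)) := by
    refine ⟨?_, fun x hx => ⟨x.1, Prod.ext rfl (sub_eq_zero.1 (hQ _ fun y => ?_))⟩⟩
    · rintro _ ⟨x, rfl⟩
      simp [CharTwo.add_self_eq_zero]
    · simpa [CharTwo.sub_eq_add] using hx _ ⟨y, rfl⟩
  exact IsMetabolic.congr ⟨_, hdiag⟩ ((QuadraticMap.Equivalent.refl Q).prod e)

end IsMetabolic

end Lagrangian

section WittCancellation

open QuadraticMap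

variable {F V V' V'' V''' : Type*} [Field F] [AddCommGroup V] [Module F V] [AddCommGroup V']
  [Module F V'] [AddCommGroup V''] [Module F V''] [AddCommGroup V'''] [Module F V''']

theorem exists_add_eq_of_orthogonal_inf [FiniteDimensional F V] {B : LinearMap.BilinForm F V}
    (hB : B.IsSymm) {A C : Submodule F V} (hA : LinearMap.ker B ≤ A) {x : V}
    (hx : ∀ y ∈ A ⊓ C, B x y = 0) :
    ∃ a c, a + c = x ∧ (∀ y ∈ A, B a y = 0) ∧ ∀ y ∈ C, B c y = 0 := by
  have hBx : B x ∈ A.dualAnnihilator ⊔ C.dualAnnihilator := by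
    rw [← Subspace.dualAnnihilator_inf_eq]
    exact (Submodule.mem_dualAnnihilator _).2 hx
  obtain ⟨φ, hφ, ψ, hψ, hsum⟩ := Submodule.mem_sup.1 hBx
  have hφ_range : φ ∈ LinearMap.range B.dualMap := by
    rw [LinearMap.range_dualMap_eq_dualAnnihilator_ker]
    exact Submodule.dualAnnihilator_anti hA hφ
  obtain ⟨η, rfl⟩ := hφ_range
  obtain ⟨a, rfl⟩ := (Module.evalEquiv F V).surjective η
  have ha : B.dualMap (Module.evalEquiv F V a) = B a := LinearMap.ext fun y => hB.eq y a
  rw [ha] at hφ hsum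
  refine ⟨a, x - a, add_sub_cancel a x, (Submodule.mem_dualAnnihilator _).1 hφ, ?_⟩
  rw [map_sub, ← hsum, add_sub_cancel_left]
  exact (Submodule.mem_dualAnnihilator _).1 hψ

/-- Witt cancellation at the level of Lagrangians: the subspace cut out of `V` is
`(W ∩ (V × L')) / L'`. -/
theorem IsLagrangian.of_prod [FiniteDimensional F V] [FiniteDimensional F V']
    {Q : QuadraticForm F V} {Q' : QuadraticForm F V'}
    {W : Submodule F (V × V')} {L' : Submodule F V'} (hW : IsLagrangian (Q.prod Q') W)
    (hL' : IsLagrangian Q' L') :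
    IsLagrangian Q ((W ⊓ L'.comap (LinearMap.snd F V V')).map (LinearMap.fst F V V')) where
  isotropic := by
    rintro _ ⟨w, ⟨hwW, hwL⟩, rfl⟩
    have hw := hW.isotropic w hwW
    rwa [prod_apply, hL'.isotropic w.2 hwL, add_zero] at hw
  mem_of_orthogonal x hx := by
    let B := (Q.prod Q').polarBilin
    have hB : LinearMap.BilinForm.IsSymm B := ⟨fun u v => polar_comm _ u v⟩
    have hker : LinearMap.ker B ≤ W := fun w hw =>
      hW.mem_of_orthogonal w fun y _ => LinearMap.congr_fun hw y
    have horth : ∀ y ∈ W ⊓ L'.comap (LinearMap.snd F V V'), B (x, 0) y = 0 := fun y hy => by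
      simpa [B] using hx y.1 ⟨y, hy, rfl⟩
    obtain ⟨a, c, hac, ha, hc⟩ := exists_add_eq_of_orthogonal_inf hB hker horth
    have hc₁ : ∀ y, polar Q c.1 y = 0 := fun y => by
      simpa [B] using hc (y, 0) L'.zero_mem
    have hc₂ : c.2 ∈ L' := hL'.mem_of_orthogonal _ fun y hy => by
      simpa [B] using hc (0, y) hy
    have hc₁W : (c.1, (0 : V')) ∈ W := hW.mem_of_orthogonal _ fun y _ => by simp [hc₁]
    have hadd : a.2 = -c.2 := eq_neg_of_add_eq_zero_left congr(($hac).2)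
    refine ⟨a + (c.1, 0), ⟨W.add_mem (hW.mem_of_orthogonal a ha) hc₁W, ?_⟩, congr(($hac).1)⟩
    simpa [hadd] using hc₂

namespace IsMetabolic

variable {Q : QuadraticForm F V} {Q' : QuadraticForm F V'}
  {Q'' : QuadraticForm F V''} {Q''' : QuadraticForm F V'''}

theorem of_prod [FiniteDimensional F V] [FiniteDimensional F V']
    (h : IsMetabolic (Q.prod Q')) (h' : IsMetabolic Q') : IsMetabolic Q :=
  let ⟨_, hW⟩ := h
  let ⟨_, hL'⟩ := h'
  ⟨_, hW.of_prod hL'⟩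

variable [CharP F 2] [FiniteDimensional F V] [FiniteDimensional F V']
  [FiniteDimensional F V'']

theorem prod_trans (h : IsMetabolic (Q.prod Q')) (h' : IsMetabolic (Q'.prod Q''))
    (hQ' : Q'.polarBilin.SeparatingLeft) : IsMetabolic (Q.prod Q'') :=
  (h.prod h'.prod_symm).prod_prod_prod_comm.of_prod (prod_of_equivalent hQ' (.refl Q'))

theorem prod_of_prod_equivalent [FiniteDimensional F V'''] (hQ : Q.polarBilin.SeparatingLeft)
    (hQ'' : IsMetabolic Q'') (hQ''' : IsMetabolic Q''')
    (e : (Q.prod Q'').Equivalent (Q'.prod Q''')) : IsMetabolic (Q.prod Q') := by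
  have hdouble : IsMetabolic ((Q.prod Q'').prod (Q.prod Q'')) :=
    ((prod_of_equivalent hQ (.refl Q)).prod (hQ''.prod hQ'')).prod_prod_prod_comm
  exact (hdouble.congr ((Equivalent.refl _).prod e)).prod_prod_prod_comm.of_prod (hQ''.prod hQ''')

end IsMetabolic

end WittCancellation

section BinaryForm

open QuadraticMap

variable {R V : Type*} [CommRing R] [AddCommGroup V] [Module R V]

/-- The binary quadratic form `[a, b] : (x, y) ↦ a x² + x y + b y²`. -/
def binaryForm (a b : R) : QuadraticForm R (R × R) :=
  a • linMulLin (LinearMap.fst R R R) (LinearMap.fst R R R) +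
    linMulLin (LinearMap.fst R R R) (LinearMap.snd R R R) +
    b • linMulLin (LinearMap.snd R R R) (LinearMap.snd R R R)

@[simp]
theorem binaryForm_apply (a b : R) (x : R × R) :
    binaryForm a b x = a * (x.1 * x.1) + x.1 * x.2 + b * (x.2 * x.2) := rfl

@[simp]
theorem polar_binaryForm [CharP R 2] (a b : R) (x y : R × R) :
    polar (binaryForm a b) x y = x.1 * y.2 + x.2 * y.1 := by
  simp only [polar, binaryForm_apply, Prod.fst_add, Prod.snd_add]
  linear_combination (a * x.1 * y.1 + b * x.2 * y.2) * (CharTwo.two_eq_zero : (2 : R) = 0)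

theorem separatingLeft_polarBilin_binaryForm [CharP R 2] (a b : R) :
    (binaryForm a b).polarBilin.SeparatingLeft := fun x hx =>
  Prod.ext (by simpa using hx (0, 1)) (by simpa using hx (1, 0))

theorem binaryForm_equivalent_comm (a b : R) : (binaryForm a b).Equivalent (binaryForm b a) :=
  ⟨{ LinearEquiv.prodComm R R R with
    map_app' := fun x => by
      simp only [binaryForm_apply, AddHom.toFun_eq_coe, LinearMap.coe_toAddHom, LinearEquiv.coe_coe,
        LinearEquiv.prodComm_apply, Prod.fst_swap, Prod.snd_swap]
      ring }⟩

theorem exists_equivalent_binaryForm_prod [CharP R 2] {Q : QuadraticForm R V} {x y : V}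
    (hxy : polar Q x y = 1) :
    ∃ U : Submodule R V, Q.Equivalent ((binaryForm (Q x) (Q y)).prod (Q.restrict U)) := by
  let B := Q.polarBilin
  let U := LinearMap.ker (B x) ⊓ LinearMap.ker (B y)
  have hself : ∀ z, polar Q z z = 0 := fun z => by
    rw [polar_self, CharTwo.two_nsmul]
  have hyx : polar Q y x = 1 := (polar_comm _ _ _).trans hxy
  let f : ((R × R) × U) →ₗ[R] V := ((LinearMap.toSpanSingleton R V x).coprod
    (LinearMap.toSpanSingleton R V y)).coprod U.subtype
  have hf : ∀ w, f w = w.1.1 • x + w.1.2 • y + w.2 := fun w => rfl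
  have hxf : ∀ w, polar Q x (f w) = w.1.2 := fun w => by
    rw [hf, polar_add_right, polar_add_right, polar_smul_right, polar_smul_right, hself, hxy,
      show polar Q x w.2 = 0 from w.2.2.1, smul_zero, zero_add, add_zero, smul_eq_mul, mul_one]
  have hyf : ∀ w, polar Q y (f w) = w.1.1 := fun w => by
    rw [hf, polar_add_right, polar_add_right, polar_smul_right, polar_smul_right, hself, hyx,
      show polar Q y w.2 = 0 from w.2.2.2, smul_zero, add_zero, add_zero, smul_eq_mul, mul_one]
  have hinj : Function.Injective f := by
    refine (injective_iff_map_eq_zero f).2 fun w hw => ?_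
    have h₁ : w.1.1 = 0 := by rw [← hyf, hw, polar_zero_right]
    have h₂ : w.1.2 = 0 := by rw [← hxf, hw, polar_zero_right]
    have h₃ : (w.2 : V) = 0 := by simpa [hf, h₁, h₂] using hw
    exact Prod.ext (Prod.ext h₁ h₂) (Subtype.ext h₃)
  have hsurj : Function.Surjective f := fun v => by
    refine ⟨⟨(polar Q y v, polar Q x v), v - polar Q y v • x - polar Q x v • y, ?_, ?_⟩, ?_⟩
    · simp [B, polar_sub_right, polar_smul_right, hself, hxy]
    · simp [B, polar_sub_right, polar_smul_right, hself, hyx]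
    · rw [hf]
      module
  refine ⟨U, Equivalent.symm ⟨⟨LinearEquiv.ofBijective f ⟨hinj, hsurj⟩, fun w => ?_⟩⟩⟩
  have hU : polar Q (w.1.1 • x + w.1.2 • y) w.2 = 0 := by
    rw [polar_add_left, polar_smul_left, polar_smul_left, show polar Q x w.2 = 0 from w.2.2.1,
      show polar Q y w.2 = 0 from w.2.2.2, smul_zero, smul_zero, add_zero]
  change Q (w.1.1 • x + w.1.2 • y + w.2) = _
  rw [QuadraticMap.map_add Q _ (w.2 : V), QuadraticMap.map_add Q, hU, polar_smul_left,
    polar_smul_right, hxy]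
  simp only [QuadraticMap.map_smul, smul_eq_mul, mul_one, add_zero, prod_apply, binaryForm_apply,
    restrict_apply, add_left_inj]
  ring

theorem IsMetabolic.exists_ne_zero [Nontrivial V] {Q : QuadraticForm R V} (h : IsMetabolic Q) :
    ∃ x ≠ 0, Q x = 0 := by
  obtain ⟨L, hL⟩ := h
  have hL_ne : L ≠ ⊥ := by
    rintro rfl
    obtain ⟨x, hx⟩ := exists_ne (0 : V)
    exact hx ((Submodule.mem_bot R).1 (hL.mem_of_orthogonal x fun y hy => by
      rw [(Submodule.mem_bot R).1 hy, polar_zero_right]))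
  obtain ⟨x, hxL, hx⟩ := L.exists_mem_ne_zero_of_ne_bot hL_ne
  exact ⟨x, hx, hL.isotropic x hxL⟩

theorem pi_fin_succ_equivalent {n : ℕ} (Q : Fin (n + 1) → QuadraticForm R V) :
    (QuadraticMap.pi Q).Equivalent ((Q 0).prod (QuadraticMap.pi fun i : Fin n => Q i.succ)) :=
  Equivalent.symm ⟨{ Fin.consLinearEquiv R (fun _ => V) with
    map_app' := fun x => by simp [Fin.sum_univ_succ] }⟩

theorem isMetabolic_binaryForm_zero_right (a : R) [CharP R 2] : IsMetabolic (binaryForm a 0) := by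
  refine ⟨LinearMap.ker (LinearMap.fst R R R), fun x hx => ?_, fun x hx => ?_⟩
  · simp [show x.1 = 0 from hx]
  · simpa using hx (0, 1) rfl

theorem isMetabolic_binaryForm_add_mul_sq [CharP R 2] (c r : R) :
    IsMetabolic (binaryForm c (r + c * r ^ 2)) := by
  refine ⟨LinearMap.range (LinearMap.toSpanSingleton R (R × R) (r, 1)), ?_, fun x hx => ?_⟩
  · rintro _ ⟨y, rfl⟩
    simp only [LinearMap.toSpanSingleton_apply, binaryForm_apply, Prod.smul_fst, Prod.smul_snd,
      smul_eq_mul]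
    linear_combination (c * r ^ 2 * y ^ 2 + r * y ^ 2) * (CharTwo.two_eq_zero : (2 : R) = 0)
  · have hx' : x.1 + x.2 * r = 0 := by simpa using hx _ ⟨1, rfl⟩
    exact ⟨x.2, Prod.ext (CharTwo.add_eq_zero.1 hx').symm (mul_one x.2)⟩

/-- On the Lagrangian the three `y`-coordinates agree and the `x`-coordinates sum to `0`. -/
theorem isMetabolic_binaryForm_add [CharP R 2] (a b c : R) :
    IsMetabolic (((binaryForm a b).prod (binaryForm a c)).prod (binaryForm a (b + c))) := by
  let f : (R × R) × R →ₗ[R] ((R × R) × R × R) × R × R :=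
    { toFun := fun v => (((v.1.1, v.2), v.1.2, v.2), v.1.1 + v.1.2, v.2)
      map_add' := fun v w => by ext <;> simp [add_add_add_comm]
      map_smul' := fun r v => by ext <;> simp [mul_add] }
  have hf : ∀ v, f v = (((v.1.1, v.2), v.1.2, v.2), v.1.1 + v.1.2, v.2) := fun _ => rfl
  refine ⟨LinearMap.range f, ?_, fun x hx => ?_⟩
  · rintro _ ⟨⟨⟨u, v⟩, y⟩, rfl⟩
    simp only [hf, prod_apply, binaryForm_apply]
    linear_combination (a * (u * u + v * v + u * v) + (u + v) * y + (b + c) * (y * y)) *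
      (CharTwo.two_eq_zero : (2 : R) = 0)
  · have h₁ : x.1.1.2 + x.2.2 = 0 := by simpa [hf] using hx _ ⟨((1, 0), 0), rfl⟩
    have h₂ : x.1.2.2 + x.2.2 = 0 := by simpa [hf] using hx _ ⟨((0, 1), 0), rfl⟩
    have h₃ : x.1.1.1 + x.1.2.1 + x.2.1 = 0 := by simpa [hf] using hx _ ⟨((0, 0), 1), rfl⟩
    rw [CharTwo.add_eq_zero] at h₁ h₂ h₃
    exact ⟨((x.1.1.1, x.1.2.1), x.2.2), by ext <;> simp [hf, h₁, h₂, h₃]⟩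

end BinaryForm

section PlaneDecomposition

open QuadraticMap

variable {F V : Type*} [Field F] [AddCommGroup V] [Module F V]

theorem smul_binaryForm_equivalent {t : F} (ht : t ≠ 0) (a b : F) :
    (t • binaryForm a (b * t)).Equivalent (binaryForm (a * t) b) :=
  ⟨{ (LinearEquiv.refl F F).prodCongr (LinearEquiv.smulOfNeZero F F t ht) with
    map_app' := fun x => by
      change a * t * (x.1 * x.1) + x.1 * (t * x.2) + b * (t * x.2 * (t * x.2)) =
        t * (a * (x.1 * x.1) + x.1 * x.2 + b * t * (x.2 * x.2))
      ring }⟩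

theorem sq_smul_equivalent {x : F} (hx : x ≠ 0) (Q : QuadraticForm F V) :
    (x ^ 2 • Q).Equivalent Q :=
  ⟨{ LinearEquiv.smulOfNeZero F V x hx with
    map_app' := fun v => (QuadraticMap.map_smul Q x v).trans (by rw [← pow_two]; rfl) }⟩

theorem exists_polar_eq_one {Q : QuadraticForm F V} (hQ : Q.polarBilin.SeparatingLeft) {x : V}
    (hx : x ≠ 0) : ∃ y, polar Q x y = 1 ∧ (Q x = 0 → Q y = 0) := by
  have hxne : ∃ y, polar Q x y ≠ 0 := by
    by_contra! h
    exact hx (hQ x h)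
  obtain ⟨z, hz⟩ := hxne
  obtain ⟨y, hy⟩ : ∃ y, polar Q x y = 1 :=
    ⟨(polar Q x z)⁻¹ • z, by rw [polar_smul_right, smul_eq_mul, inv_mul_cancel₀ hz]⟩
  by_cases hQx : Q x = 0
  · refine ⟨y - Q y • x, ?_, fun _ => ?_⟩
    · rw [polar_sub_right, polar_smul_right, polar_self, hQx, smul_zero, smul_zero, sub_zero, hy]
    · rw [sub_eq_add_neg, QuadraticMap.map_add Q, QuadraticMap.map_neg, QuadraticMap.map_smul, hQx,
        polar_neg_right, polar_smul_right, polar_comm, hy, smul_zero, add_zero, smul_eq_mul,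
        mul_one, add_neg_cancel]
  · exact ⟨y, hy, fun h => absurd h hQx⟩

/-- Witt cancellation keeps the complement of each split hyperbolic plane metabolic. -/
theorem exists_equivalent_pi_binaryForm [CharP F 2] [FiniteDimensional F V] (Q : QuadraticForm F V)
    (hQ : Q.polarBilin.SeparatingLeft) :
    ∃ (n : ℕ) (a b : Fin n → F), Q.Equivalent (QuadraticMap.pi fun i => binaryForm (a i) (b i)) ∧
      (IsMetabolic Q → a = 0 ∧ b = 0) := by
  induction hd : Module.finrank F V using Nat.strong_induction_on generalizing V with
  | _ d ih =>
  obtain hV | hV := subsingleton_or_nontrivial V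
  · exact ⟨0, 0, 0, equivalent_of_subsingleton _ _, fun _ => ⟨rfl, rfl⟩⟩
  obtain ⟨x, hx, hQx⟩ : ∃ x ≠ 0, IsMetabolic Q → Q x = 0 := by
    by_cases h : IsMetabolic Q
    · obtain ⟨x, hx, hQx⟩ := h.exists_ne_zero
      exact ⟨x, hx, fun _ => hQx⟩
    · obtain ⟨x, hx⟩ := exists_ne (0 : V)
      exact ⟨x, hx, fun h' => absurd h' h⟩
  obtain ⟨y, hxy, hQy⟩ := exists_polar_eq_one hQ hx
  obtain ⟨U, hU⟩ := exists_equivalent_binaryForm_prod hxy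
  have hUsep := (separatingLeft_polarBilin_prod_iff.1 (separatingLeft_polarBilin_congr hU hQ)).2
  have hUdim : Module.finrank F U < d := by
    obtain ⟨e⟩ := hU
    have := e.toLinearEquiv.finrank_eq
    rw [Module.finrank_prod, Module.finrank_prod, Module.finrank_self, hd] at this
    lia
  obtain ⟨n, a, b, hab, hzero⟩ := ih _ hUdim (Q.restrict U) hUsep rfl
  refine ⟨n + 1, Matrix.vecCons (Q x) a, Matrix.vecCons (Q y) b,
    hU.trans (((Equivalent.refl _).prod hab).trans (pi_fin_succ_equivalent fun i =>
      binaryForm (Matrix.vecCons (Q x) a i) (Matrix.vecCons (Q y) b i)).symm), fun h => ?_⟩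
  have hplane : IsMetabolic (binaryForm (Q x) (Q y)) := by
    rw [hQy (hQx h)]
    exact isMetabolic_binaryForm_zero_right _
  have hUmet : IsMetabolic (Q.restrict U) :=
    (h.congr hU).prod_symm.of_prod hplane
  obtain ⟨rfl, rfl⟩ := hzero hUmet
  rw [hQy (hQx h), hQx h]
  exact ⟨Matrix.cons_zero_zero, Matrix.cons_zero_zero⟩

end PlaneDecomposition

section Transversal

open QuadraticMap

variable {R ι : Type*} [CommRing R]

/-- The exchange of the two axes of the plane when `s` is true, and the identity otherwise. -/
def axisSwap (R : Type*) [CommRing R] (s : Bool) : (R × R) ≃ₗ[R] R × R :=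
  bif s then LinearEquiv.prodComm R R R else LinearEquiv.refl R (R × R)

theorem binaryForm_axisSwap (a b : R) (s : Bool) (x : R × R) :
    binaryForm (bif s then b else a) (bif s then a else b) (axisSwap R s x) =
      binaryForm a b x := by
  cases s
  · rfl
  · simp only [binaryForm_apply, axisSwap, cond_true, LinearEquiv.prodComm_apply, Prod.fst_swap,
      Prod.snd_swap]
    ring

/-- The coordinates are chosen one plane at a time: if neither choice at the plane `j` worked, the
two offending vectors would pair to a nonzero value, all other planes contributing `0`. -/
theorem exists_axisSwap_transversal_on [NoZeroDivisors R] {W : Set (ι → R × R)} [Fintype ι]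
    (hW : ∀ v ∈ W, ∀ w ∈ W, ∑ i, ((v i).1 * (w i).2 + (v i).2 * (w i).1) = 0) (S : Finset ι) :
    ∃ s : ι → Bool, ∀ w ∈ W, (∀ i ∉ S, w i = 0) → (∀ i ∈ S, (axisSwap R (s i) (w i)).2 = 0) →
      w = 0 := by
  classical
  induction S using Finset.induction_on with
  | empty => exact ⟨fun _ => false, fun w _ hw _ => funext fun i => hw i (Finset.notMem_empty i)⟩
  | insert j S hj ih =>
    obtain ⟨s, hs⟩ := ih
    by_contra! hfail
    have hoffending : ∀ b : Bool, ∃ w ∈ W, (∀ i ∉ S, i ≠ j → w i = 0) ∧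
        (∀ i ∈ S, (axisSwap R (s i) (w i)).2 = 0) ∧ (axisSwap R b (w j)).2 = 0 ∧ w j ≠ 0 := by
      intro b
      obtain ⟨w, hwW, hout, hcoord, hw⟩ := hfail (Function.update s j b)
      have hwS : ∀ i ∈ S, (axisSwap R (s i) (w i)).2 = 0 := fun i hi => by
        simpa [ne_of_mem_of_not_mem hi hj] using hcoord i (Finset.mem_insert_of_mem hi)
      have hwout : ∀ i ∉ S, i ≠ j → w i = 0 := fun i hi hij => hout i (by simp [hi, hij])
      have hwj₂ : (axisSwap R b (w j)).2 = 0 := by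
        simpa using hcoord j (Finset.mem_insert_self j S)
      refine ⟨w, hwW, hwout, hwS, hwj₂, fun hwj => ?_⟩
      refine hw (hs w hwW (fun i hi => ?_) hwS)
      by_cases hij : i = j
      · rw [hij, hwj]
      · exact hwout i hi hij
    obtain ⟨v, hvW, hvout, hvS, hvj, hv⟩ := hoffending false
    obtain ⟨w, hwW, -, hwS, hwj, hw⟩ := hoffending true
    replace hvj : (v j).2 = 0 := hvj
    replace hwj : (w j).1 = 0 := hwj
    have hvw : (v j).1 * (w j).2 = 0 := by
      rw [← hW v hvW w hwW, Finset.sum_eq_single j, hvj, zero_mul, add_zero]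
      · intro i _ hij
        by_cases hi : i ∈ S
        · have hvi := hvS i hi
          have hwi := hwS i hi
          cases hsi : s i <;> simp_all [axisSwap]
        · simp [hvout i hi hij]
      · exact fun h => absurd (Finset.mem_univ j) h
    rcases mul_eq_zero.1 hvw with h | h
    · exact hv (Prod.ext h hvj)
    · exact hw (Prod.ext hwj h)

variable [Fintype ι] [CharP R 2]

theorem polar_pi_binaryForm (a b : ι → R) (v w : ι → R × R) :
    polar (QuadraticMap.pi fun i => binaryForm (a i) (b i)) v w =
      ∑ i, ((v i).1 * (w i).2 + (v i).2 * (w i).1) := by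
  simp only [QuadraticMap.Ring.polar_pi, polar_binaryForm]

theorem IsMetabolic.exists_transversal_isLagrangian [NoZeroDivisors R] {a b : ι → R}
    (h : IsMetabolic (QuadraticMap.pi fun i => binaryForm (a i) (b i))) :
    ∃ (s : ι → Bool) (L : Submodule R (ι → R × R)),
      IsLagrangian (QuadraticMap.pi fun i =>
        binaryForm (bif s i then b i else a i) (bif s i then a i else b i)) L ∧
      ∀ w ∈ L, (∀ i, (w i).2 = 0) → w = 0 := by
  obtain ⟨L, hL⟩ := h
  obtain ⟨s, hs⟩ := exists_axisSwap_transversal_on (W := (L : Set (ι → R × R))) (fun v hv w hw => by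
    rw [← polar_pi_binaryForm a b, hL.polar_eq_zero hv hw]) Finset.univ
  let e := IsometryEquiv.pi (fun i => (⟨axisSwap R (s i), binaryForm_axisSwap (a i) (b i) (s i)⟩ :
    (binaryForm (a i) (b i)).IsometryEquiv _))
  refine ⟨s, _, hL.map e, ?_⟩
  rintro _ ⟨w, hw, rfl⟩ hzero
  rw [hs w hw (fun i hi => absurd (Finset.mem_univ i) hi) fun i _ => hzero i, map_zero]

end Transversal

section LagrangianGraph

open QuadraticMap

variable {F ι : Type*} [Field F] [Fintype ι] [CharP F 2]

/-- A vector `(u, 0)` orthogonal to `L` lies in `L`, hence is zero. -/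
theorem IsLagrangian.map_snd_eq_top {c d : ι → F} {L : Submodule F (ι → F × F)}
    (hL : IsLagrangian (QuadraticMap.pi fun i => binaryForm (c i) (d i)) L)
    (htrans : ∀ w ∈ L, (∀ i, (w i).2 = 0) → w = 0) :
    L.map ((LinearMap.snd F F F).compLeft ι) = ⊤ := by
  classical
  by_contra hne
  obtain ⟨φ, hφ, hker⟩ := Submodule.exists_le_ker_of_lt_top _ (lt_top_iff_ne_top.2 hne)
  let u : ι → F × F := fun i => (φ fun j => if i = j then 1 else 0, 0)
  have hu : u ∈ L := hL.mem_of_orthogonal u fun w hw => by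
    have hφw : φ (fun i => (w i).2) = 0 := hker ⟨w, hw, rfl⟩
    rw [φ.pi_apply_eq_sum_univ] at hφw
    rw [polar_pi_binaryForm, ← hφw]
    exact Finset.sum_congr rfl fun i _ => by
      simp only [u, mul_zero, add_zero, smul_eq_mul, mul_comm]
  have hu_zero := htrans u hu fun _ => rfl
  refine hφ (LinearMap.ext fun v => ?_)
  rw [φ.pi_apply_eq_sum_univ, LinearMap.zero_apply]
  exact Finset.sum_eq_zero fun i _ => by
    rw [show φ (fun j => if i = j then 1 else 0) = 0 from congr(($(congrFun hu_zero i)).1),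
      smul_zero]

/-- A Lagrangian transversal to the first axes is the graph of `A` over the second axes; `A` is
symmetric by orthogonality and the formula for `d` is isotropy of the basis vectors. -/
theorem IsLagrangian.exists_isSymm_matrix {c d : ι → F} {L : Submodule F (ι → F × F)}
    (hL : IsLagrangian (QuadraticMap.pi fun i => binaryForm (c i) (d i)) L)
    (htrans : ∀ w ∈ L, (∀ i, (w i).2 = 0) → w = 0) :
    ∃ A : Matrix ι ι F, A.IsSymm ∧ ∀ j, d j = A j j + ∑ k, c k * A k j ^ 2 := by
  classical
  have hbasis : ∀ j, ∃ w ∈ L, ∀ i, (w i).2 = Pi.single (M := fun _ => F) j 1 i := fun j => by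
    obtain ⟨w, hw, hwj⟩ := (hL.map_snd_eq_top htrans).ge
      (Submodule.mem_top (x := (Pi.single j 1 : ι → F)))
    exact ⟨w, hw, fun i => congrFun hwj i⟩
  choose w hwL hw using hbasis
  refine ⟨Matrix.of fun k j => (w j k).1, Matrix.IsSymm.ext fun i j => ?_, fun j => ?_⟩
  · have hpolar := hL.polar_eq_zero (hwL i) (hwL j)
    rw [polar_pi_binaryForm] at hpolar
    refine CharTwo.add_eq_zero.1 (Eq.trans ?_ hpolar)
    simp [hw, Finset.sum_add_distrib, Pi.single_apply, add_comm]
  · have hisotropic := hL.isotropic _ (hwL j)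
    refine (CharTwo.add_eq_zero.1 ((add_comm _ _).trans (Eq.trans ?_ hisotropic))).symm
    simp only [pi_apply, binaryForm_apply, ← pow_two, hw, Pi.single_apply, Matrix.of_apply, mul_ite,
      mul_one, mul_zero, ite_pow, one_pow, ne_eq, OfNat.ofNat_ne_zero, not_false_eq_true, zero_pow,
      Finset.sum_add_distrib, Finset.sum_ite_eq', Finset.mem_univ, if_true]
    ring

end LagrangianGraph

section MatrixForm

open Matrix

variable {R S ι : Type*} [CommRing R] [Fintype ι] [DecidableEq ι]

theorem toQuadraticForm'_apply (N : Matrix ι ι R) (x : ι → R) :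
    N.toQuadraticForm' x = x ⬝ᵥ N *ᵥ x := by
  rw [Matrix.toQuadraticForm', LinearMap.BilinMap.toQuadraticMap_apply, Matrix.toLinearMap₂'_apply']

theorem toQuadraticForm'_smul (t : R) (N : Matrix ι ι R) :
    (t • N).toQuadraticForm' = t • N.toQuadraticForm' :=
  QuadraticMap.ext fun x => by
    simp only [toQuadraticForm'_apply, _root_.smul_apply, smul_mulVec, dotProduct_smul]

theorem toQuadraticForm'_zero : (0 : Matrix ι ι R).toQuadraticForm' = 0 :=
  QuadraticMap.ext fun x => by
    rw [toQuadraticForm'_apply, zero_mulVec, dotProduct_zero, _root_.zero_apply]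

theorem toQuadraticForm'_mulVec {κ : Type*} [Fintype κ] [DecidableEq κ] (N : Matrix ι ι R)
    (M : Matrix ι κ R) (x : κ → R) :
    N.toQuadraticForm' (M *ᵥ x) = (Mᵀ * N * M).toQuadraticForm' x := by
  rw [toQuadraticForm'_apply, toQuadraticForm'_apply, ← mulVec_mulVec, ← mulVec_mulVec,
    mulVec_transpose, dotProduct_comm x, ← dotProduct_mulVec, dotProduct_comm]

theorem polar_toQuadraticForm' (N : Matrix ι ι R) (x y : ι → R) :
    QuadraticMap.polar N.toQuadraticForm' x y = (N + Nᵀ) *ᵥ x ⬝ᵥ y := by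
  simp only [QuadraticMap.polar, toQuadraticForm'_apply, mulVec_add, add_dotProduct,
    dotProduct_add, add_mulVec, mulVec_transpose, ← dotProduct_mulVec, dotProduct_comm (N *ᵥ x)]
  ring

theorem separatingLeft_polarBilin_toQuadraticForm'_iff {N : Matrix ι ι R} :
    N.toQuadraticForm'.polarBilin.SeparatingLeft ↔ ∀ x, (N + Nᵀ) *ᵥ x = 0 → x = 0 :=
  forall_congr' fun x => by
    simp only [QuadraticMap.polarBilin_apply_apply, polar_toQuadraticForm', dotProduct_eq_zero_iff]

theorem toQuadraticForm'_eq_iff {N N' : Matrix ι ι R} :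
    N.toQuadraticForm' = N'.toQuadraticForm' ↔
      (∀ i, N i i = N' i i) ∧ N + Nᵀ = N' + N'ᵀ := by
  refine ⟨fun h => ⟨fun i => ?_, ?_⟩, fun ⟨hdiag, hsymm⟩ => QuadraticMap.ext fun x => ?_⟩
  · simpa [toQuadraticForm'_apply] using congr($h (Pi.single i 1))
  · ext i j
    simpa [polar_toQuadraticForm'] using
      congr(QuadraticMap.polar $h (Pi.single j 1) (Pi.single i 1))
  · rw [← sub_eq_zero, toQuadraticForm'_apply, toQuadraticForm'_apply, ← dotProduct_sub,
      ← sub_mulVec]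
    simp only [dotProduct, mulVec, Finset.mul_sum, ← Fintype.sum_prod_type', Matrix.sub_apply]
    refine Finset.sum_involution (fun p _ => p.swap) (fun p _ => ?_) (fun p _ hp hswap => hp ?_)
      (fun _ _ => Finset.mem_univ _) fun _ _ => Prod.swap_swap _
    · have hpair : N p.1 p.2 + N p.2 p.1 = N' p.1 p.2 + N' p.2 p.1 := congr($hsymm p.1 p.2)
      simp only [Prod.fst_swap, Prod.snd_swap]
      linear_combination x p.1 * x p.2 * hpair
    · rw [show p.2 = p.1 from congr(($hswap).1), hdiag, sub_self, zero_mul, mul_zero]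

/-- The matrix of an equivalence transforms one coefficient matrix into the other only up to an
alternating matrix; `f` preserves alternating matrices. -/
theorem equivalent_toQuadraticForm'_map {κ : Type*} [Fintype κ] [DecidableEq κ] [CommRing S]
    {N : Matrix ι ι R} {N' : Matrix κ κ R}
    (h : N.toQuadraticForm'.Equivalent N'.toQuadraticForm') (f : R →+* S) :
    (N.map f).toQuadraticForm'.Equivalent (N'.map f).toQuadraticForm' := by
  obtain ⟨e⟩ := h
  let M := LinearMap.toMatrix' e.toLinearEquiv.toLinearMap
  let M' := LinearMap.toMatrix' e.toLinearEquiv.symm.toLinearMap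
  have hMM' : M.map f * M'.map f = 1 := by
    rw [← Matrix.map_mul, ← LinearMap.toMatrix'_comp, LinearEquiv.comp_symm, LinearMap.toMatrix'_id,
      Matrix.map_one f f.map_zero f.map_one]
  have hM'M : M'.map f * M.map f = 1 := by
    rw [← Matrix.map_mul, ← LinearMap.toMatrix'_comp, LinearEquiv.symm_comp, LinearMap.toMatrix'_id,
      Matrix.map_one f f.map_zero f.map_one]
  obtain ⟨hdiag, hsymm⟩ := toQuadraticForm'_eq_iff.1 (QuadraticMap.ext fun x => by
    rw [← toQuadraticForm'_mulVec, LinearMap.toMatrix'_mulVec]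
    exact e.map_app x : (Mᵀ * N' * M).toQuadraticForm' = N.toQuadraticForm')
  have hmap : ((M.map f)ᵀ * N'.map f * M.map f).toQuadraticForm' = (N.map f).toQuadraticForm' := by
    rw [← transpose_map, ← Matrix.map_mul, ← Matrix.map_mul, toQuadraticForm'_eq_iff]
    refine ⟨fun i => congrArg f (hdiag i), ?_⟩
    rw [← transpose_map, ← transpose_map, ← Matrix.map_add f f.map_add,
      ← Matrix.map_add f f.map_add, hsymm]
  exact ⟨⟨Matrix.toLin'OfInv hM'M hMM', fun x =>
    (toQuadraticForm'_mulVec _ _ x).trans congr($hmap x)⟩⟩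

end MatrixForm

namespace QF

open QuadraticMap Matrix

variable {F E : Type*} [Field F] [Field E]

/-- The quadratic form on `Fin q.dim → F` with coefficient matrix `q.c`. -/
def toQuadraticForm (q : QF F) : QuadraticForm F (Fin q.dim → F) :=
  q.c.toQuadraticForm'

theorem eval_eq_toQuadraticForm (q : QF F) (x : Fin q.dim → F) :
    q.eval x = q.toQuadraticForm x := by
  simp only [eval, toQuadraticForm, toQuadraticForm'_apply, dotProduct, mulVec, Finset.mul_sum]
  exact Finset.sum_congr rfl fun i _ => Finset.sum_congr rfl fun j _ => by ring

theorem isometric_iff {q q' : QF F} :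
    Isometric q q' ↔ q.toQuadraticForm.Equivalent q'.toQuadraticForm := by
  simp only [Isometric, eval_eq_toQuadraticForm]
  exact ⟨fun ⟨e, he⟩ => ⟨⟨e, he⟩⟩, fun ⟨e⟩ => ⟨e.toLinearEquiv, e.map_app⟩⟩

theorem toQuadraticForm_orthSum (q q' : QF F) :
    (orthSum q q').toQuadraticForm.Equivalent (q.toQuadraticForm.prod q'.toQuadraticForm) := by
  let e : ((Fin q.dim → F) × (Fin q'.dim → F)) ≃ₗ[F] (Fin (q.dim + q'.dim) → F) :=
    (LinearEquiv.sumArrowLequivProdArrow _ _ F F).symm ≪≫ₗ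
      LinearEquiv.funCongrLeft F F finSumFinEquiv.symm
  have he : ∀ x, e x = Sum.elim x.1 x.2 ∘ finSumFinEquiv.symm := fun _ => rfl
  have heval : ∀ x, (reindex finSumFinEquiv finSumFinEquiv
      (fromBlocks q.c 0 0 q'.c)).toQuadraticForm' (e x) =
        q.c.toQuadraticForm' x.1 + q'.c.toQuadraticForm' x.2 := fun x => by
    simp [he, toQuadraticForm'_apply, submatrix_mulVec_equiv,
      Function.comp_assoc, fromBlocks_mulVec]
  exact Equivalent.symm ⟨⟨e, heval⟩⟩

theorem toQuadraticForm_smul (t : F) (q : QF F) :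
    (smul t q).toQuadraticForm = t • q.toQuadraticForm :=
  toQuadraticForm'_smul t q.c

theorem toQuadraticForm_bin (a b : F) :
    (bin a b).toQuadraticForm.Equivalent (binaryForm a b) :=
  have heval (x : Fin 2 → F) : binaryForm a b (LinearEquiv.finTwoArrow F F x) =
      (!![a, 1; 0, b]).toQuadraticForm' x := by
    simp only [LinearEquiv.finTwoArrow_apply, binaryForm_apply, toQuadraticForm'_apply, dotProduct,
      mulVec, of_apply, cons_val', cons_val_fin_one, Fin.sum_univ_two, cons_val_zero, cons_val_one,
      one_mul, zero_mul, zero_add]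
    ring
  ⟨⟨LinearEquiv.finTwoArrow F F, heval⟩⟩

theorem toQuadraticForm_zeros (l : ℕ) : (zeros l : QF F).toQuadraticForm = 0 :=
  (congrArg Matrix.toQuadraticForm' diagonal_zero).trans toQuadraticForm'_zero

theorem nonsingular_iff {q : QF F} :
    q.Nonsingular ↔ q.toQuadraticForm.polarBilin.SeparatingLeft :=
  separatingLeft_polarBilin_toQuadraticForm'_iff.symm

theorem nonsingular_iff_det_ne_zero {q : QF F} : q.Nonsingular ↔ (q.c + q.cᵀ).det ≠ 0 := by
  rw [Ne, ← exists_mulVec_eq_zero_iff]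
  simp only [Nonsingular, not_exists, not_and, not_imp_not, ne_eq]

theorem Nonsingular.map {q : QF F} (hq : q.Nonsingular) (f : F →+* E) : (q.map f).Nonsingular := by
  rw [nonsingular_iff_det_ne_zero] at hq ⊢
  have hdet : (q.c.map f + (q.c.map f)ᵀ).det = f (q.c + q.cᵀ).det := by
    rw [f.map_det, RingHom.mapMatrix_apply, Matrix.map_add f (_root_.map_add f), transpose_map]
  exact hdet.trans_ne ((map_ne_zero f).2 hq)

theorem Isometric.map {q q' : QF F} (h : Isometric q q') (f : F →+* E) :
    Isometric (q.map f) (q'.map f) :=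
  isometric_iff.2 (equivalent_toQuadraticForm'_map (isometric_iff.1 h) f)

theorem Nonsingular.orthSum {q q' : QF F} (hq : q.Nonsingular) (hq' : q'.Nonsingular) :
    (q.orthSum q').Nonsingular :=
  nonsingular_iff.2 (separatingLeft_polarBilin_congr (toQuadraticForm_orthSum q q').symm
    (separatingLeft_polarBilin_prod_iff.2 ⟨nonsingular_iff.1 hq, nonsingular_iff.1 hq'⟩))

theorem Nonsingular.smul {q : QF F} (hq : q.Nonsingular) {t : F} (ht : t ≠ 0) :
    (smul t q).Nonsingular := fun (x : Fin q.dim → F) hx => hq x <| by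
  have hx' : (t • q.c + (t • q.c)ᵀ) *ᵥ x = 0 := hx
  rw [transpose_smul, ← smul_add, smul_mulVec] at hx'
  exact (smul_eq_zero.1 hx').resolve_left ht

instance : IsEmpty (Fin (nil : QF F).dim) := Fin.isEmpty

instance : IsEmpty (Fin (zeros 0 : QF F).dim) := Fin.isEmpty

theorem nonsingular_nil : (nil : QF F).Nonsingular := fun _ _ => funext fun i => i.elim0

theorem nonsingular_bin [CharP F 2] (a b : F) : (bin a b).Nonsingular :=
  nonsingular_iff.2 (separatingLeft_polarBilin_congr (toQuadraticForm_bin a b).symm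
    (separatingLeft_polarBilin_binaryForm a b))

theorem nonsingular_sumList {l : List (QF F)} (hl : ∀ q ∈ l, q.Nonsingular) :
    (sumList l).Nonsingular := by
  induction l with
  | nil => exact nonsingular_nil
  | cons q l ih =>
    exact (hl q List.mem_cons_self).orthSum (ih fun q' hq' => hl q' (List.mem_cons_of_mem q hq'))

theorem map_orthSum (f : F →+* E) (q q' : QF F) :
    (orthSum q q').map f = orthSum (q.map f) (q'.map f) :=
  have hblocks : (reindex finSumFinEquiv finSumFinEquiv (fromBlocks q.c 0 0 q'.c)).map f =
      reindex finSumFinEquiv finSumFinEquiv (fromBlocks (q.c.map f) 0 0 (q'.c.map f)) := by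
    rw [reindex_apply, reindex_apply, ← submatrix_map, fromBlocks_map, Matrix.map_zero f f.map_zero,
      Matrix.map_zero f f.map_zero]
  congrArg (QF.mk (q.dim + q'.dim)) hblocks

theorem map_nil (f : F →+* E) : (nil : QF F).map f = nil :=
  congrArg (QF.mk 0) (Subsingleton.elim _ _)

theorem map_sumList (f : F →+* E) (l : List (QF F)) :
    (sumList l).map f = sumList (l.map (QF.map f)) := by
  induction l with
  | nil => exact map_nil f
  | cons q l ih => exact (map_orthSum f q (sumList l)).trans (congrArg (orthSum (q.map f)) ih)

theorem map_bin (f : F →+* E) (a b : F) : (bin a b).map f = bin (f a) (f b) :=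
  have hmatrix : (!![a, 1; 0, b]).map f = !![f a, 1; 0, f b] := by
    ext i j
    fin_cases i <;> fin_cases j <;> simp
  congrArg (QF.mk 2) hmatrix

theorem map_zeros (f : F →+* E) (l : ℕ) : (zeros l : QF F).map f = zeros l :=
  congrArg (QF.mk l) <|
    (diagonal_map f.map_zero).trans (congrArg diagonal (funext fun _ => f.map_zero))

theorem map_smul (f : F →+* E) (t : F) (q : QF F) : (smul t q).map f = smul (f t) (q.map f) :=
  congrArg (QF.mk q.dim) <| Matrix.map_smul' f t q.c f.map_mul

/-- The orthogonal sum of the planes `[a i, b i]`. -/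
def binSum {n : ℕ} (a b : Fin n → F) : QF F := sumList (List.ofFn fun i => bin (a i) (b i))

theorem map_binSum (f : F →+* E) {n : ℕ} (a b : Fin n → F) :
    (binSum a b).map f = binSum (f ∘ a) (f ∘ b) := by
  simp only [binSum, map_sumList, List.map_ofFn, Function.comp_def, map_bin]

theorem hyp_eq_binSum (k : ℕ) : (hyp k : QF F) = binSum (0 : Fin k → F) 0 := by
  rw [hyp, ← List.ofFn_const]
  rfl

theorem map_hyp (f : F →+* E) (k : ℕ) : (hyp k : QF F).map f = hyp k := by
  rw [hyp_eq_binSum, hyp_eq_binSum, map_binSum]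
  congr 1 <;> exact funext fun _ => f.map_zero

theorem toQuadraticForm_binSum {n : ℕ} (a b : Fin n → F) :
    (binSum a b).toQuadraticForm.Equivalent (QuadraticMap.pi fun i => binaryForm (a i) (b i)) := by
  induction n with
  | zero => exact equivalent_of_subsingleton (nil : QF F).toQuadraticForm _
  | succ n ih =>
    rw [binSum, List.ofFn_succ]
    exact (toQuadraticForm_orthSum _ _).trans <|
      ((toQuadraticForm_bin _ _).prod (ih (fun i => a i.succ) fun i => b i.succ)).trans
        (pi_fin_succ_equivalent fun i => binaryForm (a i) (b i)).symm

theorem isMetabolic_hyp [CharP F 2] (k : ℕ) : IsMetabolic (hyp k : QF F).toQuadraticForm := by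
  induction k with
  | zero =>
    exact IsMetabolic.zero.congr
      (equivalent_of_subsingleton (0 : QuadraticForm F PUnit) (nil : QF F).toQuadraticForm)
  | succ k ih =>
    exact (((isMetabolic_binaryForm_zero_right 0).congr (toQuadraticForm_bin 0 0).symm).prod
      ih).congr (toQuadraticForm_orthSum hypPlane (hyp k)).symm

theorem hyperbolic_iff_isMetabolic [CharP F 2] {q : QF F} (hq : q.Nonsingular) :
    q.Hyperbolic ↔ IsMetabolic q.toQuadraticForm := by
  refine ⟨fun ⟨k, hk⟩ => (isMetabolic_hyp k).congr (isometric_iff.1 hk).symm, fun h => ?_⟩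
  obtain ⟨n, a, b, hab, hzero⟩ := exists_equivalent_pi_binaryForm _ (nonsingular_iff.1 hq)
  obtain ⟨rfl, rfl⟩ := hzero h
  refine ⟨n, isometric_iff.2 (hab.trans ?_)⟩
  rw [hyp_eq_binSum]
  exact (toQuadraticForm_binSum 0 0).symm

end QF

section WittGroup

open QF QuadraticMap

variable {F E : Type*} [Field F] [Field E]

namespace QF

theorem WittEquiv.map {q q' : QF F} (h : WittEquiv q q') (f : F →+* E) :
    WittEquiv (q.map f) (q'.map f) := by
  obtain ⟨k, k', l, l', h⟩ := h
  refine ⟨k, k', l, l', ?_⟩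
  simpa only [map_orthSum, map_hyp, map_zeros] using h.map f

variable [CharP F 2]

theorem wittEquiv_iff_isMetabolic {q q' : QF F} (hq : q.Nonsingular) (hq' : q'.Nonsingular) :
    WittEquiv q q' ↔ IsMetabolic (q.toQuadraticForm.prod q'.toQuadraticForm) := by
  refine ⟨fun ⟨k, k', l, l', h⟩ => ?_, fun h => ?_⟩
  · have hsum (q : QF F) (k l : ℕ) :
        (orthSum q (orthSum (hyp k) (zeros l))).toQuadraticForm.Equivalent
          (q.toQuadraticForm.prod ((hyp k).toQuadraticForm.prod (zeros l).toQuadraticForm)) :=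
      (toQuadraticForm_orthSum _ _).trans ((Equivalent.refl _).prod (toQuadraticForm_orthSum _ _))
    have hmet (k l : ℕ) : IsMetabolic
        ((hyp k : QF F).toQuadraticForm.prod (zeros l : QF F).toQuadraticForm) :=
      (isMetabolic_hyp k).prod (toQuadraticForm_zeros (F := F) l ▸ IsMetabolic.zero)
    exact .prod_of_prod_equivalent (nonsingular_iff.1 hq) (hmet k l) (hmet k' l')
      ((hsum q k l).symm.trans ((isometric_iff.1 h).trans (hsum q' k' l')))
  · obtain ⟨k, hk⟩ := (hyperbolic_iff_isMetabolic (hq.orthSum hq')).2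
      (h.congr (toQuadraticForm_orthSum q q').symm)
    obtain ⟨k', hk'⟩ := (hyperbolic_iff_isMetabolic (hq'.orthSum hq')).2
      ((IsMetabolic.prod_of_equivalent (nonsingular_iff.1 hq') (.refl _)).congr
        (toQuadraticForm_orthSum q' q').symm)
    have hsplit {q₁ q₂ q₃ : QF F} {n : ℕ} (hn : Isometric (orthSum q₂ q₃) (hyp n)) :
        (q₁.toQuadraticForm.prod (q₂.toQuadraticForm.prod q₃.toQuadraticForm)).Equivalent
          (orthSum q₁ (orthSum (hyp n) (zeros 0))).toQuadraticForm :=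
      ((Equivalent.refl _).prod ((toQuadraticForm_orthSum q₂ q₃).symm.trans
        ((isometric_iff.1 hn).trans ((prod_equivalent_of_subsingleton _ _).symm.trans
          (toQuadraticForm_orthSum (hyp n) (zeros 0)).symm)))).trans
            (toQuadraticForm_orthSum _ _).symm
    exact ⟨k', k, 0, 0, isometric_iff.2 ((hsplit hk').symm.trans
      ((prod_assoc_equivalent _ _ _).symm.trans ((prod_comm_equivalent _ _).trans (hsplit hk))))⟩

end QF

variable [CharP F 2] [CharP E 2]

/-- Witt equivalence of nonsingular quadratic forms. -/
def wittSetoid (F : Type*) [Field F] [CharP F 2] : Setoid {q : QF F // q.Nonsingular} where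
  r q q' := WittEquiv q.1 q'.1
  iseqv :=
    { refl := fun q => (wittEquiv_iff_isMetabolic q.2 q.2).2
        (.prod_of_equivalent (nonsingular_iff.1 q.2) (.refl _))
      symm := fun {q q'} h => (wittEquiv_iff_isMetabolic q'.2 q.2).2
        ((wittEquiv_iff_isMetabolic q.2 q'.2).1 h).prod_symm
      trans := fun {q q' q''} h h' => (wittEquiv_iff_isMetabolic q.2 q''.2).2
        (((wittEquiv_iff_isMetabolic q.2 q'.2).1 h).prod_trans
          ((wittEquiv_iff_isMetabolic q'.2 q''.2).1 h') (nonsingular_iff.1 q'.2)) }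

/-- The Witt group `W_q(F)` of nonsingular quadratic forms. -/
def WittGroup (F : Type*) [Field F] [CharP F 2] : Type _ := Quotient (wittSetoid F)

/-- The class of a nonsingular quadratic form in the Witt group. -/
def wittClass (q : QF F) (hq : q.Nonsingular) : WittGroup F := Quotient.mk (wittSetoid F) ⟨q, hq⟩

theorem wittClass_eq_iff {q q' : QF F} {hq : q.Nonsingular} {hq' : q'.Nonsingular} :
    wittClass q hq = wittClass q' hq' ↔ WittEquiv q q' :=
  Quotient.eq (r := wittSetoid F)

theorem wittClass_congr {q q' : QF F} (h : q = q') (hq : q.Nonsingular) (hq' : q'.Nonsingular) :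
    wittClass q hq = wittClass q' hq' := by
  subst h
  rfl

theorem wittClass_eq_of_equivalent {q q' : QF F} (hq : q.Nonsingular) (hq' : q'.Nonsingular)
    (h : q.toQuadraticForm.Equivalent q'.toQuadraticForm) : wittClass q hq = wittClass q' hq' :=
  wittClass_eq_iff.2 ((wittEquiv_iff_isMetabolic hq hq').2
    (.prod_of_equivalent (nonsingular_iff.1 hq) h))

namespace WittGroup

instance : Zero (WittGroup F) := ⟨wittClass nil nonsingular_nil⟩

instance : Add (WittGroup F) :=
  ⟨Quotient.map₂ (fun q q' => ⟨orthSum q.1 q'.1, q.2.orthSum q'.2⟩) fun q₁ q₁' h₁ q₂ q₂' h₂ =>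
    (wittEquiv_iff_isMetabolic (q₁.2.orthSum q₂.2) (q₁'.2.orthSum q₂'.2)).2 <|
      (((wittEquiv_iff_isMetabolic q₁.2 q₁'.2).1 h₁).prod
        ((wittEquiv_iff_isMetabolic q₂.2 q₂'.2).1 h₂)).prod_prod_prod_comm.congr <|
          (toQuadraticForm_orthSum _ _).symm.prod (toQuadraticForm_orthSum _ _).symm⟩

theorem exists_wittClass_eq (w : WittGroup F) : ∃ q hq, wittClass q hq = w :=
  Quotient.ind (motive := fun w => ∃ q hq, wittClass q hq = w) (fun q => ⟨q.1, q.2, rfl⟩) w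

end WittGroup

theorem wittClass_orthSum {q q' : QF F} (hq : q.Nonsingular) (hq' : q'.Nonsingular) :
    wittClass (orthSum q q') (hq.orthSum hq') = wittClass q hq + wittClass q' hq' := rfl

theorem wittClass_eq_zero_iff {q : QF F} {hq : q.Nonsingular} :
    wittClass q hq = 0 ↔ IsMetabolic q.toQuadraticForm :=
  (wittClass_eq_iff.trans (wittEquiv_iff_isMetabolic hq nonsingular_nil)).trans
    ⟨fun h => h.congr (prod_equivalent_of_subsingleton _ _),
      fun h => h.congr (prod_equivalent_of_subsingleton _ _).symm⟩

theorem wittClass_add_eq_zero_iff {q q' : QF F} {hq : q.Nonsingular} {hq' : q'.Nonsingular} :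
    wittClass q hq + wittClass q' hq' = 0 ↔
      IsMetabolic (q.toQuadraticForm.prod q'.toQuadraticForm) :=
  (wittClass_eq_zero_iff (hq := hq.orthSum hq')).trans
    ⟨fun h => h.congr (toQuadraticForm_orthSum q q'),
      fun h => h.congr (toQuadraticForm_orthSum q q').symm⟩

namespace WittGroup

theorem add_self (w : WittGroup F) : w + w = 0 := by
  obtain ⟨q, hq, rfl⟩ := exists_wittClass_eq w
  exact wittClass_add_eq_zero_iff.2 (.prod_of_equivalent (nonsingular_iff.1 hq) (.refl _))

protected theorem add_comm (w₁ w₂ : WittGroup F) : w₁ + w₂ = w₂ + w₁ := by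
  obtain ⟨q₁, h₁, rfl⟩ := exists_wittClass_eq w₁
  obtain ⟨q₂, h₂, rfl⟩ := exists_wittClass_eq w₂
  exact wittClass_eq_of_equivalent (h₁.orthSum h₂) (h₂.orthSum h₁) <|
    (toQuadraticForm_orthSum _ _).trans <|
      (prod_comm_equivalent _ _).trans (toQuadraticForm_orthSum _ _).symm

protected theorem add_assoc (w₁ w₂ w₃ : WittGroup F) : w₁ + w₂ + w₃ = w₁ + (w₂ + w₃) := by
  obtain ⟨q₁, h₁, rfl⟩ := exists_wittClass_eq w₁
  obtain ⟨q₂, h₂, rfl⟩ := exists_wittClass_eq w₂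
  obtain ⟨q₃, h₃, rfl⟩ := exists_wittClass_eq w₃
  exact wittClass_eq_of_equivalent ((h₁.orthSum h₂).orthSum h₃) (h₁.orthSum (h₂.orthSum h₃)) <|
    ((toQuadraticForm_orthSum _ _).trans ((toQuadraticForm_orthSum _ _).prod (.refl _))).trans <|
      (prod_assoc_equivalent _ _ _).trans <|
        ((Equivalent.refl _).prod (toQuadraticForm_orthSum _ _).symm).trans
          (toQuadraticForm_orthSum _ _).symm

protected theorem zero_add (w : WittGroup F) : 0 + w = w := by
  obtain ⟨q, hq, rfl⟩ := exists_wittClass_eq w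
  exact wittClass_eq_of_equivalent (nonsingular_nil.orthSum hq) hq <|
    (toQuadraticForm_orthSum nil q).trans <|
      (prod_comm_equivalent _ _).trans (prod_equivalent_of_subsingleton _ _)

instance : Neg (WittGroup F) := ⟨id⟩

instance : AddCommGroup (WittGroup F) where
  __ := AddGroup.ofLeftAxioms WittGroup.add_assoc WittGroup.zero_add add_self
  add_comm := WittGroup.add_comm

theorem neg_eq_self (w : WittGroup F) : -w = w := rfl

/-- Scalar extension of Witt classes. -/
def map (f : F →+* E) : WittGroup F →+ WittGroup E where
  toFun := Quotient.map (fun q => ⟨q.1.map f, q.2.map f⟩) fun _ _ h => h.map f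
  map_zero' := wittClass_congr (map_nil f) (nonsingular_nil.map f) nonsingular_nil
  map_add' w₁ w₂ := by
    obtain ⟨q₁, h₁, rfl⟩ := exists_wittClass_eq w₁
    obtain ⟨q₂, h₂, rfl⟩ := exists_wittClass_eq w₂
    exact wittClass_congr (map_orthSum f q₁ q₂) ((h₁.orthSum h₂).map f)
      ((h₁.map f).orthSum (h₂.map f))

theorem map_wittClass (f : F →+* E) {q : QF F} (hq : q.Nonsingular) :
    map f (wittClass q hq) = wittClass (q.map f) (hq.map f) := rfl

end WittGroup

end WittGroup

theorem sum_sum_sub_sum_diag_mem {ι M : Type*} [AddCommGroup M] (P : AddSubgroup M)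
    (g : ι → ι → M) (hg : ∀ i j, i ≠ j → g i j + g j i ∈ P) (s : Finset ι) :
    ∑ i ∈ s, ∑ j ∈ s, g i j - ∑ i ∈ s, g i i ∈ P := by
  classical
  induction s using Finset.induction_on with
  | empty => simp [P.zero_mem]
  | insert k s hk ih =>
    have hsplit : ∑ i ∈ insert k s, ∑ j ∈ insert k s, g i j - ∑ i ∈ insert k s, g i i =
        ∑ i ∈ s, (g k i + g i k) + (∑ i ∈ s, ∑ j ∈ s, g i j - ∑ i ∈ s, g i i) := by
      simp only [Finset.sum_insert hk, Finset.sum_add_distrib]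
      abel
    rw [hsplit]
    exact P.add_mem (P.sum_mem fun i hi => hg k i (ne_of_mem_of_not_mem hi hk).symm) ih

section WittKernel

open QF QuadraticMap

variable {F K : Type*} [Field F] [Field K] [Algebra F K]

theorem ne_zero_iff_of_algebraMap_eq_sq {t : F} {x : K} (hx : algebraMap F K t = x ^ 2) :
    t ≠ 0 ↔ x ≠ 0 := by
  rw [← map_ne_zero (algebraMap F K), hx, pow_ne_zero_iff two_ne_zero]

/-- The form `⊥ ⟨1, t⟩_b ⊗ q` with `(t, q)` running through the list. -/
def pfisterSum (l : List (F × QF F)) : QF F :=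
  sumList (l.map fun p => p.2.orthSum (smul p.1 p.2))

variable (K) in
/-- The lists of pairs `(t, q)` with `t ∈ K*²` and `q` nonsingular. -/
def IsSquarePfisterList (l : List (F × QF F)) : Prop :=
  ∀ p ∈ l, (∃ x : K, x ≠ 0 ∧ algebraMap F K p.1 = x ^ 2) ∧ p.2.Nonsingular

theorem nonsingular_pfisterSum {l : List (F × QF F)} (hl : IsSquarePfisterList K l) :
    (pfisterSum l).Nonsingular :=
  nonsingular_sumList fun q hq => by
    obtain ⟨p, hp, rfl⟩ := List.mem_map.1 hq
    obtain ⟨⟨x, hx, hpx⟩, hq⟩ := hl p hp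
    exact hq.orthSum (hq.smul ((ne_zero_iff_of_algebraMap_eq_sq hpx).2 hx))

variable [CharP F 2]

theorem wittClass_bin_add (a b c : F) :
    wittClass (bin a (b + c)) (nonsingular_bin a (b + c)) =
      wittClass (bin a b) (nonsingular_bin a b) + wittClass (bin a c) (nonsingular_bin a c) := by
  refine (eq_neg_of_add_eq_zero_right ?_).trans (WittGroup.neg_eq_self _)
  exact wittClass_add_eq_zero_iff (hq := (nonsingular_bin a b).orthSum (nonsingular_bin a c)).2 <|
    (isMetabolic_binaryForm_add a b c).congr <|
      (((toQuadraticForm_bin a b).prod (toQuadraticForm_bin a c)).symm.trans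
        (toQuadraticForm_orthSum _ _).symm).prod (toQuadraticForm_bin a (b + c)).symm

/-- The Witt class of the binary form `[a, b]`, as an additive function of `b`. -/
def binClass (a : F) : F →+ WittGroup F :=
  AddMonoidHom.mk' (fun b => wittClass (bin a b) (nonsingular_bin a b)) (wittClass_bin_add a)

theorem binClass_comm (a b : F) : binClass a b = binClass b a :=
  wittClass_eq_of_equivalent (nonsingular_bin a b) (nonsingular_bin b a) <|
    (toQuadraticForm_bin a b).trans <|
      (binaryForm_equivalent_comm a b).trans (toQuadraticForm_bin b a).symm

theorem binClass_eq_binClass_mul_sq (c r : F) : binClass c r = binClass c (c * r ^ 2) := by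
  refine (eq_neg_of_add_eq_zero_left ?_).trans (WittGroup.neg_eq_self _)
  rw [← map_add]
  exact (wittClass_eq_zero_iff (hq := nonsingular_bin _ _)).2
    ((isMetabolic_binaryForm_add_mul_sq c r).congr (toQuadraticForm_bin _ _).symm)

theorem nonsingular_binSum {n : ℕ} (a b : Fin n → F) : (binSum a b).Nonsingular :=
  nonsingular_sumList fun q hq => by
    obtain ⟨i, rfl⟩ := List.mem_ofFn.1 hq
    exact nonsingular_bin (a i) (b i)

theorem wittClass_binSum {n : ℕ} (a b : Fin n → F) :
    wittClass (binSum a b) (nonsingular_binSum a b) = ∑ i, binClass (a i) (b i) := by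
  induction n with
  | zero => rfl
  | succ n ih =>
    rw [Fin.sum_univ_succ, ← ih (fun i => a i.succ) fun i => b i.succ]
    exact wittClass_congr (congrArg sumList (List.ofFn_succ (f := fun i => bin (a i) (b i)))) _
      ((nonsingular_bin (a 0) (b 0)).orthSum (nonsingular_binSum _ _))

theorem QF.Nonsingular.exists_equivalent_binSum {q : QF F} (hq : q.Nonsingular) :
    ∃ (n : ℕ) (a b : Fin n → F),
      q.toQuadraticForm.Equivalent (binSum a b).toQuadraticForm := by
  obtain ⟨n, a, b, hab, -⟩ := exists_equivalent_pi_binaryForm _ (nonsingular_iff.1 hq)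
  exact ⟨n, a, b, hab.trans (toQuadraticForm_binSum a b).symm⟩

/-- The Witt class of `⟨1, t⟩_b ⊗ q ≅ q ⊥ t q`. -/
def pfisterClass (t : F) (ht : t ≠ 0) (q : QF F) (hq : q.Nonsingular) : WittGroup F :=
  wittClass (q.orthSum (smul t q)) (hq.orthSum (hq.smul ht))

theorem pfisterClass_bin (t : F) (ht : t ≠ 0) (a b : F) :
    pfisterClass t ht (bin a (b * t)) (nonsingular_bin a (b * t)) =
      binClass a (b * t) + binClass (a * t) b := by
  have hsmul : wittClass (smul t (bin a (b * t))) ((nonsingular_bin _ _).smul ht) =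
      binClass (a * t) b := by
    refine wittClass_eq_of_equivalent _ (nonsingular_bin (a * t) b) ?_
    rw [toQuadraticForm_smul]
    exact (smul_equivalent_smul (toQuadraticForm_bin a (b * t)) t).trans <|
      (smul_binaryForm_equivalent ht a b).trans (toQuadraticForm_bin (a * t) b).symm
  rw [pfisterClass, wittClass_orthSum (nonsingular_bin _ _) ((nonsingular_bin _ _).smul ht), hsmul]
  rfl

/-- The subgroup `Σ_{t ∈ K*²} ⟨1, t⟩_b ⊗ W_q(F)` of the Witt group of `F`, where `t` ranges over
the nonzero elements of `F` that are squares in `K`. -/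
def squarePfisterSubgroup (F K : Type*) [Field F] [CharP F 2] [Field K] [Algebra F K] :
    AddSubgroup (WittGroup F) :=
  AddSubgroup.closure {w | ∃ (t : F) (ht : t ≠ 0) (q : QF F) (hq : q.Nonsingular),
    (∃ x : K, algebraMap F K t = x ^ 2) ∧ w = pfisterClass t ht q hq}

theorem pfisterClass_mem_squarePfisterSubgroup {t : F} (ht : t ≠ 0)
    (hx : ∃ x : K, algebraMap F K t = x ^ 2) {q : QF F} (hq : q.Nonsingular) :
    pfisterClass t ht q hq ∈ squarePfisterSubgroup F K :=
  AddSubgroup.subset_closure ⟨t, ht, q, hq, hx, rfl⟩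

theorem binClass_add_binClass_mem_squarePfisterSubgroup {t : F}
    (ht : ∃ x : K, algebraMap F K t = x ^ 2) (a b : F) :
    binClass a (b * t) + binClass b (a * t) ∈ squarePfisterSubgroup F K := by
  obtain rfl | ht₀ := eq_or_ne t 0
  · simp only [mul_zero, map_zero, add_zero, AddSubgroup.zero_mem]
  · rw [binClass_comm b, ← pfisterClass_bin t ht₀]
    exact pfisterClass_mem_squarePfisterSubgroup ht₀ ht (nonsingular_bin a (b * t))

/-- Writing `A k j ^ 2 = T k j` in `F` and `d j = r j + ∑ k, c k * T k j`, one has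
`r j ^ 2 = T j j`. Hence `[c j, r j]` cancels the diagonal term `[c j, c j * T j j]`, and the
remaining terms pair up into `⟨1, T k j⟩_b ⊗ [c j, c k * T k j]`. -/
theorem sum_binClass_mem_squarePfisterSubgroup {ι : Type*} [Fintype ι]
    (hK : ∀ x : K, ∃ y : F, algebraMap F K y = x ^ 2) {c d : ι → F} {A : Matrix ι ι K}
    (hA : A.IsSymm)
    (hd : ∀ j, algebraMap F K (d j) = A j j + ∑ k, algebraMap F K (c k) * A k j ^ 2) :
    ∑ j, binClass (c j) (d j) ∈ squarePfisterSubgroup F K := by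
  classical
  choose T hT using fun k j => hK (A k j)
  have hTsymm : ∀ k j, T k j = T j k := fun k j =>
    (algebraMap F K).injective (by rw [hT, hT, hA.apply])
  let r : ι → F := fun j => d j - ∑ k, c k * T k j
  have hr : ∀ j, algebraMap F K (r j) = A j j := fun j => by
    simp only [r, map_sub, map_sum, map_mul, hT, hd, add_sub_cancel_right]
  have hrT : ∀ j, r j ^ 2 = T j j := fun j =>
    (algebraMap F K).injective (by rw [map_pow, hr, hT])
  have hterm : ∀ j, binClass (c j) (d j) =
      ∑ k, binClass (c j) (c k * T k j) - binClass (c j) (c j * T j j) := fun j => by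
    rw [← hrT, ← binClass_eq_binClass_mul_sq, ← map_sum, sub_eq_add_neg, WittGroup.neg_eq_self,
      ← map_add, add_sub_cancel]
  rw [Finset.sum_congr rfl fun j _ => hterm j, Finset.sum_sub_distrib]
  refine sum_sum_sub_sum_diag_mem _ (fun j k => binClass (c j) (c k * T k j)) (fun j k _ => ?_) _
  rw [hTsymm j k]
  exact binClass_add_binClass_mem_squarePfisterSubgroup ⟨A k j, hT k j⟩ (c j) (c k)

namespace WittGroup

variable [CharP K 2]

theorem map_pfisterClass_eq_zero {t : F} (ht : t ≠ 0) {x : K} (hx : algebraMap F K t = x ^ 2)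
    {q : QF F} (hq : q.Nonsingular) : map (algebraMap F K) (pfisterClass t ht q hq) = 0 := by
  rw [pfisterClass, wittClass_orthSum hq (hq.smul ht), map_add, map_wittClass, map_wittClass,
    wittClass_add_eq_zero_iff, QF.map_smul, toQuadraticForm_smul, hx]
  have hx₀ := (ne_zero_iff_of_algebraMap_eq_sq hx).1 ht
  exact .prod_of_equivalent (nonsingular_iff.1 (hq.map _)) (sq_smul_equivalent hx₀ _).symm

theorem mem_squarePfisterSubgroup_of_map_eq_zero
    (hK : ∀ x : K, ∃ y : F, algebraMap F K y = x ^ 2) {w : WittGroup F}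
    (hw : map (algebraMap F K) w = 0) : w ∈ squarePfisterSubgroup F K := by
  obtain ⟨q, hq, rfl⟩ := exists_wittClass_eq w
  obtain ⟨n, a, b, hab⟩ := hq.exists_equivalent_binSum
  rw [wittClass_eq_of_equivalent hq (nonsingular_binSum a b) hab] at hw ⊢
  rw [map_wittClass, wittClass_eq_zero_iff, map_binSum] at hw
  obtain ⟨s, L, hL, htrans⟩ :=
    (hw.congr (toQuadraticForm_binSum _ _)).exists_transversal_isLagrangian
  obtain ⟨A, hA, hAd⟩ := hL.exists_isSymm_matrix htrans
  have hswap : ∀ i, binClass (a i) (b i) =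
      binClass (bif s i then b i else a i) (bif s i then a i else b i) := fun i => by
    cases s i
    · rfl
    · exact binClass_comm _ _
  rw [wittClass_binSum, Finset.sum_congr rfl fun i _ => hswap i]
  refine sum_binClass_mem_squarePfisterSubgroup hK hA fun j => ?_
  simpa only [Bool.apply_cond (algebraMap F K), Function.comp_apply] using hAd j

theorem ker_map_algebraMap (hK : ∀ x : K, ∃ y : F, algebraMap F K y = x ^ 2) :
    (map (algebraMap F K)).ker = squarePfisterSubgroup F K := by
  refine le_antisymm (fun w hw => mem_squarePfisterSubgroup_of_map_eq_zero hK hw)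
    ((AddSubgroup.closure_le _).2 ?_)
  rintro _ ⟨t, ht, q, hq, ⟨x, hx⟩, rfl⟩
  exact map_pfisterClass_eq_zero ht hx hq

end WittGroup

theorem exists_wittClass_pfisterSum_eq {w : WittGroup F} (hw : w ∈ squarePfisterSubgroup F K) :
    ∃ (l : List (F × QF F)) (hl : IsSquarePfisterList K l),
      wittClass (pfisterSum l) (nonsingular_pfisterSum hl) = w := by
  induction hw using AddSubgroup.closure_induction_left with
  | zero => exact ⟨[], List.forall_mem_nil _, rfl⟩
  | add_left _ hp _ _ ih | neg_add_cancel _ hp _ _ ih =>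
    obtain ⟨t, ht, q, hq, ⟨x, hx⟩, rfl⟩ := hp
    obtain ⟨l, hl, rfl⟩ := ih
    have hx₀ := (ne_zero_iff_of_algebraMap_eq_sq hx).1 ht
    exact ⟨(t, q) :: l, List.forall_mem_cons.2 ⟨⟨⟨x, hx₀, hx⟩, hq⟩, hl⟩, rfl⟩

theorem wittClass_pfisterSum_mem {l : List (F × QF F)} (hl : IsSquarePfisterList K l) :
    wittClass (pfisterSum l) (nonsingular_pfisterSum hl) ∈ squarePfisterSubgroup F K := by
  induction l with
  | nil => exact zero_mem _
  | cons p l ih =>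
    obtain ⟨⟨⟨x, hx, hpx⟩, hq⟩, hl⟩ := List.forall_mem_cons.1 hl
    have hp := (ne_zero_iff_of_algebraMap_eq_sq hpx).2 hx
    exact add_mem (pfisterClass_mem_squarePfisterSubgroup hp ⟨x, hpx⟩ hq) (ih hl)

theorem wittClass_mem_squarePfisterSubgroup_iff {q : QF F} {hq : q.Nonsingular} :
    wittClass q hq ∈ squarePfisterSubgroup F K ↔
      ∃ l, IsSquarePfisterList K l ∧ WittEquiv q (pfisterSum l) := by
  refine ⟨fun h => ?_, fun ⟨l, hl, hql⟩ => ?_⟩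
  · obtain ⟨l, hl, hlq⟩ := exists_wittClass_pfisterSum_eq h
    exact ⟨l, hl, wittClass_eq_iff.1 hlq.symm⟩
  · rw [wittClass_eq_iff.2 hql]
    exact wittClass_pfisterSum_mem hl

end WittKernel

open QF in
/-- Let `F` be a field of characteristic 2 and `K/F` an extension with
`K² ⊆ F`.  Then the Witt kernel `W_q(K/F)` equals `Σ_{t ∈ K*²} ⟨1,t⟩_b ⊗ W_q(F)`:
the class of a nonsingular quadratic form `q` over `F` becomes trivial (hyperbolic)
over `K` if and only if `q` is Witt equivalent to a finite orthogonal sum of forms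
`⟨1,t⟩_b ⊗ q' ≅ q' ⊥ t·q'` with `t ∈ K*²` (so `t ∈ F*`) and `q'` nonsingular over `F`. -/
theorem wittKernel_exponent_one_extension
    (F K : Type*) [Field F] [Field K] [Algebra F K] [CharP F 2]
    (hK : ∀ x : K, ∃ y : F, algebraMap F K y = x ^ 2) :
    ∀ q : QF F, q.Nonsingular →
      (Hyperbolic (q.map (algebraMap F K)) ↔
        ∃ l : List (F × QF F),
          (∀ p ∈ l, (∃ x : K, x ≠ 0 ∧ algebraMap F K p.1 = x ^ 2) ∧ p.2.Nonsingular) ∧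
          WittEquiv q (sumList (l.map fun p => p.2.orthSum (smul p.1 p.2)))) := by
  have : CharP K 2 := charP_of_injective_algebraMap (algebraMap F K).injective 2
  intro q hq
  rw [hyperbolic_iff_isMetabolic (hq.map _), ← wittClass_eq_zero_iff (hq := hq.map _),
    ← WittGroup.map_wittClass _ hq, ← AddMonoidHom.mem_ker, WittGroup.ker_map_algebraMap hK,
    wittClass_mem_squarePfisterSubgroup_iff]
  rfl
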